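/- Let (f_n)_{n≥0} be a non-increasing sequence of gambles on Ω with each f_n n-measurable, let ε > 0, and for each n let S_n be an almost-desirable selection such that limsup F^{S_n}(ω) ≤ f_n(ω) − E_V(f_n) + ε/2 for every path ω. Then for all k ≤ n and every path ω: F^{S_n}(ω_k) ≤ f_k(ω) − E_V(f_n) + ε/2. -/

import Mathlib

/-!
Superadditivity and domination of the minimum make each local functional bounded above by the
maximum, so an almost-desirable `S(s)` takes a nonnegative value at some state. From `ω_k` one may
therefore keep moving to states where `S` is nonnegative; along the resulting path `ω'` the process
`F^S` is non-decreasing from time `k` on, whence `F^S(ω_k) ≤ limsup F^S(ω')`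
(`exists_extension_le_limsupF`). The bound assumed on the limsup at `ω'`, the inequality
`f_n ≤ f_k`, and the `k`-measurability of `f_k` (`ω'` and `ω` agree up to time `k`) give the result.
-/

open Filter

/-- The length-`n` initial segment `ω_n` of a path `ω`. -/
def seg {X : Type} (ω : ℕ → X) (n : ℕ) : List X :=
  List.ofFn (fun i : Fin n => ω i)

/-- The cylinder set of a situation `s`: all paths having `s` as initial segment. -/
def cyl {X : Type} (s : List X) : Set (ℕ → X) :=
  {ω | seg ω s.length = s}

/-- A gamble `f` on paths is `n`-measurable if it only depends on the first `n` states. -/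
def Meas {X : Type} (n : ℕ) (f : (ℕ → X) → ℝ) : Prop :=
  ∀ ω ω' : ℕ → X, seg ω n = seg ω' n → f ω = f ω'

/-- A local model assigns to every situation a superadditive, positively homogeneous
functional on gambles on `X` that dominates the minimum. -/
def IsLocalModel {X : Type} [Fintype X] [Nonempty X]
    (E : List X → (X → ℝ) → ℝ) : Prop :=
  (∀ (s : List X) (f g : X → ℝ), E s f + E s g ≤ E s (f + g)) ∧
  (∀ (s : List X) (c : ℝ) (f : X → ℝ), 0 ≤ c → E s (c • f) = c * E s f) ∧
  (∀ (s : List X) (f : X → ℝ), (⨅ x, f x) ≤ E s f)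

/-- The real process `F^S` associated with a selection `S`:
`F^S(x₁…xₙ) = ∑_{i=1}^n S(x₁…x_{i-1})(x_i)`. -/
noncomputable def procF {X : Type} (S : List X → X → ℝ) (s : List X) : ℝ :=
  ∑ i : Fin s.length, S (s.take i.1) (s.get i)

/-- `limsup F^S`, as a gamble on paths (valued in the extended reals). -/
noncomputable def limsupF {X : Type} (S : List X → X → ℝ) (ω : ℕ → X) : EReal :=
  Filter.limsup (fun n => ((procF S (seg ω n) : ℝ) : EReal)) Filter.atTop

/-- A selection is almost-desirable (w.r.t. the local model `E`) if `E(S(s)|s) ≥ 0`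
for every situation `s`. -/
def AlmostDesirable {X : Type} (E : List X → (X → ℝ) → ℝ)
    (S : List X → X → ℝ) : Prop :=
  ∀ s : List X, 0 ≤ E s (S s)

/-- The Williams natural extension `E_W(f)`. -/
noncomputable def EW {X : Type} (E : List X → (X → ℝ) → ℝ)
    (f : (ℕ → X) → ℝ) : EReal :=
  sSup {a : EReal | ∃ α : ℝ, a = (α : EReal) ∧
    ∃ (n : ℕ) (S : List X → X → ℝ), AlmostDesirable E S ∧
      ∀ ω : ℕ → X, procF S (seg ω n) ≤ f ω - α}

/-- The Ville–Vovk–Shafer natural extension `E_V(f)`. -/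
noncomputable def EV {X : Type} (E : List X → (X → ℝ) → ℝ)
    (f : (ℕ → X) → ℝ) : EReal :=
  sSup {a : EReal | ∃ α : ℝ, a = (α : EReal) ∧
    ∃ S : List X → X → ℝ, AlmostDesirable E S ∧
      ∀ ω : ℕ → X, limsupF S ω ≤ ((f ω - α : ℝ) : EReal)}

theorem seg_succ {X : Type} (ω : ℕ → X) (n : ℕ) : seg ω (n + 1) = seg ω n ++ [ω n] := by
  simp only [seg, List.ofFn_succ', List.concat_eq_append, Fin.val_castSucc, Fin.val_last]

theorem procF_append_singleton {X : Type} (S : List X → X → ℝ) (s : List X) (x : X) :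
    procF S (s ++ [x]) = procF S s + S s x := by
  -- Sums over `range` avoid the dependence of the index type on the list.
  have key : ∀ t : List X, ∀ y : X, procF S t = ∑ i ∈ Finset.range t.length,
      S (t.take i) (t.getD i y) := by
    intro t y
    rw [procF, Finset.sum_range]
    refine Finset.sum_congr rfl fun i _ => ?_
    simp
  rw [key _ x, key s x, List.length_append, List.length_singleton, Finset.sum_range_succ]
  congr 1
  · refine Finset.sum_congr rfl fun i hi => ?_
    have hi' : i < s.length := Finset.mem_range.1 hi
    rw [List.take_append_of_le_length hi'.le, List.getD_append _ _ _ _ hi']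
  · simp

/-- A local model is bounded above by the maximum, so an almost-desirable gamble cannot be
negative everywhere. -/
theorem exists_nonneg_of_localModel {X : Type} [Fintype X] [Nonempty X]
    {E : List X → (X → ℝ) → ℝ} (hE : IsLocalModel E) {s : List X} {g : X → ℝ}
    (hg : 0 ≤ E s g) : ∃ x, 0 ≤ g x := by
  obtain ⟨hadd, hhom, hmin⟩ := hE
  by_contra! hneg
  have h0 : E s 0 = 0 := by simpa using hhom s 0 0 le_rfl
  have h1 := hadd s g (-g)
  rw [add_neg_cancel, h0] at h1
  obtain ⟨x, hx⟩ := exists_eq_ciInf_of_finite (f := -g)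
  have h2 := hmin s (-g)
  have h3 := hneg x
  rw [← hx, Pi.neg_apply] at h2
  linarith

/-- Every situation on a path can be continued to a path along which the limsup of `F^S` is at
least the value of `F^S` in that situation. -/
theorem exists_extension_le_limsupF {X : Type} (S : List X → X → ℝ)
    (hS : ∀ s, ∃ x, 0 ≤ S s x) (ω : ℕ → X) (k : ℕ) :
    ∃ ω' : ℕ → X, seg ω' k = seg ω k ∧
      ((procF S (seg ω k) : ℝ) : EReal) ≤ limsupF S ω' := by
  choose g hg using hS
  -- `L m` is the situation reached from `ω_k` after `m` moves to states chosen by `g`.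
  let L : ℕ → List X := fun m => Nat.rec (seg ω k) (fun _ s => s ++ [g s]) m
  let ω' : ℕ → X := fun i => if i < k then ω i else g (L (i - k))
  have h0 : seg ω' k = seg ω k := by
    unfold seg
    congr 1
    funext i
    simp [ω']
  have hL : ∀ m, seg ω' (k + m) = L m := by
    intro m
    induction m with
    | zero => exact h0
    | succ m ih =>
      rw [← add_assoc, seg_succ, ih]
      simp [ω', L]
  have hmono : ∀ m, procF S (seg ω k) ≤ procF S (L m) := by
    intro m
    induction m with
    | zero => exact le_rfl
    | succ m ih =>
      have h : procF S (L (m + 1)) = procF S (L m) + S (L m) (g (L m)) :=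
        procF_append_singleton S (L m) (g (L m))
      linarith [hg (L m)]
  refine ⟨ω', h0, ?_⟩
  refine le_limsup_of_frequently_le (Eventually.frequently ?_)
  filter_upwards [eventually_ge_atTop k] with n hn
  obtain ⟨m, rfl⟩ := Nat.exists_eq_add_of_le hn
  rw [hL]
  exact_mod_cast hmono m

/-- for a non-increasing sequence of `n`-measurable gambles and
almost-desirable selections witnessing `E_V(fₙ)` up to `ε/2`, the processes satisfy
`F^{Sₙ}(ω_k) ≤ f_k(ω) − E_V(fₙ) + ε/2` for all `k ≤ n`. -/
theorem process_bound_nonincreasing {X : Type} [Fintype X] [Nonempty X]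
    (E : List X → (X → ℝ) → ℝ) (hE : IsLocalModel E)
    (f : ℕ → (ℕ → X) → ℝ) (hanti : Antitone f)
    (hmeas : ∀ n, Meas n (f n))
    (ε : ℝ) (hε : 0 < ε)
    (S : ℕ → List X → X → ℝ) (hS : ∀ n, AlmostDesirable E (S n))
    (hwit : ∀ (n : ℕ) (ω : ℕ → X),
      limsupF (S n) ω ≤ ((f n ω : ℝ) : EReal) - EV E (f n) + ((ε / 2 : ℝ) : EReal)) :
    ∀ (k n : ℕ), k ≤ n → ∀ ω : ℕ → X,
      ((procF (S n) (seg ω k) : ℝ) : EReal) ≤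
        ((f k ω : ℝ) : EReal) - EV E (f n) + ((ε / 2 : ℝ) : EReal) := by
  intro k n hkn ω
  obtain ⟨ω', hseg, hle⟩ := exists_extension_le_limsupF (S n)
    (fun s => exists_nonneg_of_localModel hE (hS n s)) ω k
  have hf : f n ω' ≤ f k ω := (hanti hkn ω').trans_eq (hmeas k ω' ω hseg)
  refine (hle.trans (hwit n ω')).trans ?_
  exact add_le_add_left (EReal.sub_le_sub (EReal.coe_le_coe_iff.2 hf) le_rfl) _
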